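/- For all 1 ≤ i,j,k,l ≤ 3, the second derivatives of the Coulomb kernel matrix have zero spherical average: ∫_{S²} |z|³ ∂_k ∂_l a_{ij}(z) dσ(z) = 0, where the integral is taken over the unit sphere S² ⊂ ℝ³ with its surface measure σ. -/

import Mathlib

open MeasureTheory

/-- The Coulomb kernel matrix `a_{ij}(z) = (1/|z|)(δ_{ij} − z_i z_j/|z|²)`. -/
noncomputable def aK (i j : Fin 3) (z : EuclideanSpace ℝ (Fin 3)) : ℝ :=
  (1 / ‖z‖) * ((if i = j then (1 : ℝ) else 0) - z i * z j / ‖z‖ ^ 2)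

/-- The second partial derivative `∂_k ∂_l a_{ij}`. -/
noncomputable def d2aK (i j k l : Fin 3) (z : EuclideanSpace ℝ (Fin 3)) : ℝ :=
  fderiv ℝ (fun w => fderiv ℝ (aK i j) w (EuclideanSpace.single l 1)) z
    (EuclideanSpace.single k 1)

/-!
Rotation invariance of the surface measure gives `∫ DF(z)(Az) = 0` over the sphere for every
skew-adjoint `A` and every `C¹` function `F`. If `F` is homogeneous of degree `1 - d`, where `d` is
the dimension, then on the unit sphere each partial derivative of `F` is a sum of such rotational
derivatives:
`∂ᵤF(z) = ∑ᵢ D(zᵢF)(z)(Aᵢz)` with `Aᵢz = zᵢ u - ⟪u, z⟫ eᵢ`;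
by Euler's relation the terms of order zero cancel exactly in this degree. The first derivatives of
the Coulomb kernel are homogeneous of degree `-2 = 1 - 3`.
-/

open Metric Module Topology
open scoped RealInnerProductSpace

section Homogeneous

variable {E G : Type*} [NormedAddCommGroup E] [NormedSpace ℝ E]
  [NormedAddCommGroup G] [NormedSpace ℝ G] {f : E → G} {m : ℝ} {z : E}

/-- Positive homogeneity of real degree `m`, required only away from the origin, where functions of
negative degree are singular and take a junk value. -/
def IsPosHomogeneous (f : E → G) (m : ℝ) : Prop :=
  ∀ ⦃z : E⦄, z ≠ 0 → ∀ ⦃t : ℝ⦄, 0 < t → f (t • z) = t ^ m • f z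

namespace IsPosHomogeneous

protected lemma fderiv (hf : IsPosHomogeneous f m) : IsPosHomogeneous (fderiv ℝ f) (m - 1) := by
  intro z hz t ht
  have hscaled : (fun w => f (t • w)) =ᶠ[𝓝 z] t ^ m • f := by
    filter_upwards [isOpen_ne.mem_nhds hz] with w hw using hf hw ht
  have hchain : t • fderiv ℝ f (t • z) = t ^ m • fderiv ℝ f z := by
    rw [← fderiv_comp_smul, hscaled.fderiv_eq, fderiv_const_smul_field, Pi.smul_apply]
  rw [Real.rpow_sub_one ht.ne', div_eq_inv_mul, mul_smul, ← hchain, inv_smul_smul₀ ht.ne']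

lemma fderiv_apply (hf : IsPosHomogeneous f m) (v : E) :
    IsPosHomogeneous (fun z => fderiv ℝ f z v) (m - 1) := fun z hz t ht => by
  simp only [hf.fderiv hz ht, smul_apply]

lemma fderiv_apply_self (hf : IsPosHomogeneous f m) (hz : z ≠ 0) (hd : DifferentiableAt ℝ f z) :
    fderiv ℝ f z z = m • f z := by
  have hray : HasDerivAt (fun t : ℝ => t • z) z 1 := by
    simpa using (hasDerivAt_id (1 : ℝ)).smul_const z
  have hchain : HasDerivAt (fun t : ℝ => f (t • z)) (fderiv ℝ f z z) 1 :=
    HasFDerivAt.comp_hasDerivAt 1 (by simpa using hd.hasFDerivAt) hray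
  have hpower : HasDerivAt (fun t : ℝ => t ^ m • f z) (m • f z) 1 := by
    simpa using (Real.hasDerivAt_rpow_const (x := 1) (p := m) (by simp)).smul_const (f z)
  refine hchain.unique (hpower.congr_of_eventuallyEq ?_)
  filter_upwards [lt_mem_nhds one_pos] with t ht using hf hz ht

end IsPosHomogeneous

end Homogeneous

section Calculus

variable {E G : Type*} [NormedAddCommGroup E] [NormedSpace ℝ E]
  [NormedAddCommGroup G] [NormedSpace ℝ G]

lemma continuousOn_fderiv_clm_apply {f : E → G} {s : Set E} (hf : ∀ z ∈ s, ContDiffAt ℝ 1 f z)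
    (A : E →L[ℝ] E) : ContinuousOn (fun z => fderiv ℝ f z (A z)) s := fun z hz =>
  (((hf z hz).fderiv_right (m := 0) (by norm_num)).continuousAt.clm_apply
    A.continuous.continuousAt).continuousWithinAt

end Calculus

section HausdorffMeasure

variable {E V : Type*} [NormedAddCommGroup E] [MeasurableSpace E] [BorelSpace E]

lemma hausdorffMeasure_image_lt_top_of_contDiff [NormedSpace ℝ E]
    [NormedAddCommGroup V] [NormedSpace ℝ V] [FiniteDimensional ℝ V]
    {f : V → E} (hf : ContDiff ℝ 1 f) {K : Set V} (hK : IsCompact K) :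
    μH[finrank ℝ V] (f '' K) < ⊤ := by
  borelize V
  obtain ⟨C, hC⟩ := (hf.locallyLipschitz.locallyLipschitzOn
    (s := K)).exists_lipschitzOnWith_of_compact hK
  refine (hC.hausdorffMeasure_image_le (Nat.cast_nonneg _)).trans_lt ?_
  exact ENNReal.mul_lt_top (ENNReal.rpow_lt_top_of_nonneg (Nat.cast_nonneg _) (by simp))
    hK.measure_lt_top

lemma hausdorffMeasure_sphere_lt_top [InnerProductSpace ℝ E] {n : ℕ}
    (hn : finrank ℝ E = n + 1) : μH[n] (sphere (0 : E) 1) < ⊤ := by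
  have : FiniteDimensional ℝ E := FiniteDimensional.of_finrank_eq_succ hn
  refine (isCompact_sphere _ _).measure_lt_top_of_nhdsWithin fun x hx => ?_
  lift x to sphere (0 : E) 1 using hx
  have hpole : ‖-(x : E)‖ = 1 := norm_eq_of_mem_sphere (-x)
  have hdim : finrank ℝ (ℝ ∙ (-(x : E)))ᗮ = n :=
    have : Fact (finrank ℝ E = n + 1) := ⟨hn⟩
    Submodule.finrank_orthogonal_span_singleton (ne_zero_of_mem_unit_sphere (-x))
  refine ⟨(fun w : (ℝ ∙ (-(x : E)))ᗮ => (stereoInvFun hpole w : E)) '' closedBall 0 1, ?_, ?_⟩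
  · have hsource : x ∈ (stereographic hpole).source := by
      rw [stereographic_source]
      exact fun h => ne_neg_of_mem_unit_sphere ℝ x h
    have hcenter : (stereographic hpole).symm 0 = x :=
      (congrArg _ (stereographic_neg_apply x).symm).trans ((stereographic hpole).left_inv hsource)
    have hopen : (stereographic hpole).symm '' closedBall 0 1 ∈ 𝓝 x := by
      have hnear := (isOpenEmbedding_stereographic_symm hpole).isOpenMap.image_mem_nhds
        (closedBall_mem_nhds 0 one_pos)
      rwa [hcenter] at hnear
    have himage := Filter.image_mem_map (m := Subtype.val) hopen
    rwa [map_nhds_subtype_val, Set.image_image] at himage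
  · have hsmooth : ContDiff ℝ 1 fun w : (ℝ ∙ (-(x : E)))ᗮ => (stereoInvFun hpole w : E) :=
      contDiff_stereoInvFunAux.comp (ℝ ∙ (-(x : E)))ᗮ.subtypeL.contDiff
    simpa only [hdim] using
      hausdorffMeasure_image_lt_top_of_contDiff hsmooth (isCompact_closedBall 0 1)

end HausdorffMeasure

section Rotations

variable {E G : Type*} [NormedAddCommGroup E] [InnerProductSpace ℝ E]
  [NormedAddCommGroup G] [NormedSpace ℝ G]

/-- The generator of the rotations in the plane of `u` and `v`, that is the skew-adjoint map
`z ↦ ⟪u, z⟫ v - ⟪v, z⟫ u`. -/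
noncomputable def rotationGenerator (u v : E) : E →L[ℝ] E :=
  InnerProductSpace.rankOne ℝ v u - InnerProductSpace.rankOne ℝ u v

lemma rotationGenerator_apply (u v z : E) :
    rotationGenerator u v z = ⟪u, z⟫ • v - ⟪v, z⟫ • u := rfl

lemma rotationGenerator_mem_skewAdjoint [CompleteSpace E] (u v : E) :
    rotationGenerator u v ∈ skewAdjoint (E →L[ℝ] E) := by
  rw [skewAdjoint.mem_iff, rotationGenerator, star_sub, ContinuousLinearMap.star_eq_adjoint,
    ContinuousLinearMap.star_eq_adjoint, InnerProductSpace.adjoint_rankOne,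
    InnerProductSpace.adjoint_rankOne, neg_sub]

lemma exists_linearIsometryEquiv_flow [CompleteSpace E] {A : E →L[ℝ] E}
    (hA : A ∈ skewAdjoint (E →L[ℝ] E)) :
    ∃ R : ℝ → E ≃ₗᵢ[ℝ] E, (∀ z, R 0 z = z) ∧
      ∀ t z, HasDerivAt (fun s => R s z) (A (R t z)) t := by
  let +nondep : NormedAlgebra ℚ (E →L[ℝ] E) := .restrictScalars ℚ ℝ _
  have hunitary (t : ℝ) : NormedSpace.exp (t • A) ∈ unitary (E →L[ℝ] E) :=
    NormedSpace.exp_mem_unitary_of_mem_skewAdjoint (skewAdjoint.smul_mem t hA)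
  refine ⟨fun t => Unitary.linearIsometryEquiv ⟨_, hunitary t⟩, fun z => ?_, fun t z => ?_⟩
  · change NormedSpace.exp ((0 : ℝ) • A) z = z
    simp
  · exact (ContinuousLinearMap.apply ℝ E z).hasFDerivAt.comp_hasDerivAt t
      (hasDerivAt_exp_smul_const' A t)

lemma sum_fderiv_inner_smul_rotationGenerator {ι : Type*} [Fintype ι] (b : OrthonormalBasis ι ℝ E)
    {F : E → G} {z : E} (hF : DifferentiableAt ℝ F z) (u : E) :
    ∑ i, fderiv ℝ (fun w => ⟪b i, w⟫ • F w) z (rotationGenerator (b i) u z) =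
      ‖z‖ ^ 2 • fderiv ℝ F z u - ⟪u, z⟫ • fderiv ℝ F z z
        - ((finrank ℝ E - 1 : ℝ) * ⟪u, z⟫) • F z := by
  have hproduct (i : ι) (w : E) : fderiv ℝ (fun w => ⟪b i, w⟫ • F w) z w =
      ⟪b i, z⟫ • fderiv ℝ F z w + ⟪b i, w⟫ • F z := by
    have h := ((innerSL ℝ (b i)).hasFDerivAt (x := z)).fun_smul hF.hasFDerivAt
    simpa using DFunLike.congr_fun h.fderiv w
  have hexpand : ∑ i, ⟪b i, z⟫ • fderiv ℝ F z (b i) = fderiv ℝ F z z := by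
    simp_rw [← map_smul, ← map_sum, b.sum_repr']
  have hparseval (v : E) : ∑ i, ⟪b i, z⟫ * ⟪b i, v⟫ = ⟪z, v⟫ := by
    simp_rw [real_inner_comm z (b _), b.sum_inner_mul_inner]
  have hsplit (i : ι) : fderiv ℝ (fun w => ⟪b i, w⟫ • F w) z (rotationGenerator (b i) u z) =
      (⟪b i, z⟫ * ⟪b i, z⟫) • fderiv ℝ F z u - ⟪u, z⟫ • ⟪b i, z⟫ • fderiv ℝ F z (b i)
        + (⟪b i, z⟫ * ⟪b i, u⟫ - ⟪u, z⟫) • F z := by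
    rw [hproduct, rotationGenerator_apply]
    simp only [map_sub, map_smul, inner_sub_right, inner_smul_right,
      real_inner_self_eq_norm_sq, b.norm_eq_one]
    module
  simp_rw [hsplit]
  rw [Finset.sum_add_distrib, Finset.sum_sub_distrib, ← Finset.sum_smul, ← Finset.sum_smul,
    ← Finset.smul_sum, hexpand, Finset.sum_sub_distrib, hparseval, hparseval, Finset.sum_const,
    Finset.card_univ, ← finrank_eq_card_basis b.toBasis, real_inner_self_eq_norm_sq,
    real_inner_comm u z]
  module

end Rotations

section Sphere

variable {E G : Type*} [NormedAddCommGroup E] [InnerProductSpace ℝ E]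
  [MeasurableSpace E] [BorelSpace E] [NormedAddCommGroup G] {μ : Measure E} {r : ℝ} {F : E → G}

lemma integrableOn_sphere_of_continuousOn [FiniteDimensional ℝ E] (hfin : μ (sphere 0 r) ≠ ⊤)
    (hF : ContinuousOn F (sphere 0 r)) : IntegrableOn F (sphere 0 r) μ :=
  hF.integrableOn_of_subset_isCompact (isCompact_sphere _ _) isClosed_sphere.measurableSet
    subset_rfl hfin

variable [NormedSpace ℝ G]

lemma setIntegral_sphere_comp_linearIsometryEquiv (e : E ≃ₗᵢ[ℝ] E) (he : MeasurePreserving e μ μ)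
    (F : E → G) : ∫ z in sphere 0 r, F (e z) ∂μ = ∫ z in sphere 0 r, F z ∂μ := by
  have hsphere : e ⁻¹' sphere 0 r = sphere 0 r := by ext z; simp
  simpa only [hsphere] using
    he.setIntegral_preimage_emb e.toHomeomorph.measurableEmbedding F (sphere 0 r)

variable [FiniteDimensional ℝ E]

lemma setIntegral_sphere_fderiv_skewAdjoint_eq_zero
    (hμ : ∀ e : E ≃ₗᵢ[ℝ] E, MeasurePreserving e μ μ)
    (hfin : μ (sphere 0 r) ≠ ⊤) (hF : ∀ z ∈ sphere 0 r, ContDiffAt ℝ 1 F z)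
    {A : E →L[ℝ] E} (hA : A ∈ skewAdjoint (E →L[ℝ] E)) :
    ∫ z in sphere 0 r, fderiv ℝ F z (A z) ∂μ = 0 := by
  obtain ⟨R, hR0, hR⟩ := exists_linearIsometryEquiv_flow hA
  have hRmem (t : ℝ) {z : E} (hz : z ∈ sphere 0 r) : R t z ∈ sphere 0 r := by simpa using hz
  have hFcont : ContinuousOn F (sphere 0 r) := fun z hz => (hF z hz).continuousAt.continuousWithinAt
  have hF'cont := continuousOn_fderiv_clm_apply hF A
  obtain ⟨C, hC⟩ := (isCompact_sphere 0 r).exists_bound_of_continuousOn hF'cont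
  have hderiv : HasDerivAt (fun t => ∫ z in sphere 0 r, F (R t z) ∂μ)
      (∫ z in sphere 0 r, fderiv ℝ F (R 0 z) (A (R 0 z)) ∂μ) 0 := by
    refine (hasDerivAt_integral_of_dominated_loc_of_deriv_le (bound := fun _ => C)
      (F' := fun t z => fderiv ℝ F (R t z) (A (R t z))) Filter.univ_mem
      (.of_forall fun t => ?_) ?_ ?_ ?_ ?_ ?_).2
    · exact (hFcont.comp (R t).continuous.continuousOn fun z => hRmem t).aestronglyMeasurable
        isClosed_sphere.measurableSet
    · simp only [hR0]
      exact integrableOn_sphere_of_continuousOn hfin hFcont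
    · simpa only [hR0] using hF'cont.aestronglyMeasurable isClosed_sphere.measurableSet
    · exact ae_restrict_of_forall_mem isClosed_sphere.measurableSet
        fun z hz t _ => hC _ (hRmem t hz)
    · exact integrableOn_sphere_of_continuousOn hfin continuousOn_const
    · exact ae_restrict_of_forall_mem isClosed_sphere.measurableSet fun z hz t _ =>
        ((hF _ (hRmem t hz)).differentiableAt one_ne_zero).hasFDerivAt.comp_hasDerivAt t (hR t z)
  simp_rw [setIntegral_sphere_comp_linearIsometryEquiv _ (hμ _), hR0] at hderiv
  exact hderiv.unique (hasDerivAt_const _ _)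

lemma setIntegral_sphere_fderiv_eq_zero (hμ : ∀ e : E ≃ₗᵢ[ℝ] E, MeasurePreserving e μ μ)
    (hfin : μ (sphere 0 1) ≠ ⊤) (hF : ContDiffOn ℝ 1 F {0}ᶜ)
    (hhom : IsPosHomogeneous F (1 - finrank ℝ E)) (u : E) :
    ∫ z in sphere 0 1, fderiv ℝ F z u ∂μ = 0 := by
  let b := stdOrthonormalBasis ℝ E
  have hne {z : E} (hz : z ∈ sphere 0 1) : z ≠ 0 := ne_zero_of_mem_unit_sphere ⟨z, hz⟩
  have hFat {z : E} (hz : z ∈ sphere 0 1) : ContDiffAt ℝ 1 F z :=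
    hF.contDiffAt (isOpen_ne.mem_nhds (hne hz))
  have hbF (i) : ∀ z ∈ sphere (0 : E) 1, ContDiffAt ℝ 1 (fun w => ⟪b i, w⟫ • F w) z :=
    fun z hz => (innerSL ℝ (b i)).contDiff.contDiffAt.smul (hFat hz)
  have hskew (i) := rotationGenerator_mem_skewAdjoint (b i) u
  calc ∫ z in sphere 0 1, fderiv ℝ F z u ∂μ
      = ∫ z in sphere 0 1,
          ∑ i, fderiv ℝ (fun w => ⟪b i, w⟫ • F w) z (rotationGenerator (b i) u z) ∂μ := by
        refine setIntegral_congr_fun isClosed_sphere.measurableSet fun z hz => ?_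
        have hd := (hFat hz).differentiableAt one_ne_zero
        have hz1 : ‖z‖ = 1 := by simpa using hz
        rw [sum_fderiv_inner_smul_rotationGenerator b hd, hhom.fderiv_apply_self (hne hz) hd, hz1]
        module
    _ = ∑ i, ∫ z in sphere 0 1,
          fderiv ℝ (fun w => ⟪b i, w⟫ • F w) z (rotationGenerator (b i) u z) ∂μ :=
        integral_finsetSum _ fun i _ =>
          integrableOn_sphere_of_continuousOn hfin (continuousOn_fderiv_clm_apply (hbF i) _)
    _ = 0 := Finset.sum_eq_zero fun i _ =>
        setIntegral_sphere_fderiv_skewAdjoint_eq_zero hμ hfin (hbF i) (hskew i)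

end Sphere

theorem second_deriv_kernel_spherical_average_zero_general
    {E G : Type*} [NormedAddCommGroup E] [InnerProductSpace ℝ E]
    [MeasurableSpace E] [BorelSpace E] [NormedAddCommGroup G] [NormedSpace ℝ G]
    [CompleteSpace G] {n : ℕ} (hdim : finrank ℝ E = n + 1) {f : E → G} (hf : ContDiffOn ℝ 2 f {0}ᶜ)
    (hhom : IsPosHomogeneous f (1 - n)) (u v : E) :
    ∫ z in sphere (0 : E) 1,
      ‖z‖ ^ (n + 1) • fderiv ℝ (fun w => fderiv ℝ f w v) z u ∂(μH[n]) = 0 := by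
  have : FiniteDimensional ℝ E := FiniteDimensional.of_finrank_eq_succ hdim
  have hweight : ∀ z ∈ sphere (0 : E) 1,
      ‖z‖ ^ (n + 1) • fderiv ℝ (fun w => fderiv ℝ f w v) z u =
        fderiv ℝ (fun w => fderiv ℝ f w v) z u := fun z hz => by
    rw [mem_sphere_zero_iff_norm.mp hz, one_pow, one_smul]
  have hsmooth : ContDiffOn ℝ 1 (fun w => fderiv ℝ f w v) {0}ᶜ :=
    (hf.fderiv_of_isOpen isOpen_compl_singleton (by norm_num)).clm_apply contDiffOn_const
  have hdegree : (1 - n - 1 : ℝ) = 1 - finrank ℝ E := by rw [hdim]; push_cast; ring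
  rw [setIntegral_congr_fun isClosed_sphere.measurableSet hweight]
  exact setIntegral_sphere_fderiv_eq_zero
    (fun e => e.toIsometryEquiv.measurePreserving_hausdorffMeasure n)
    (hausdorffMeasure_sphere_lt_top hdim).ne hsmooth (hdegree ▸ hhom.fderiv_apply v) u

lemma contDiffOn_aK (i j : Fin 3) {n : WithTop ℕ∞} : ContDiffOn ℝ n (aK i j) {0}ᶜ := fun z hz => by
  have hnorm : ContDiffAt ℝ n (fun w : EuclideanSpace ℝ (Fin 3) => ‖w‖) z := contDiffAt_norm ℝ hz
  have hz' : ‖z‖ ≠ 0 := norm_ne_zero_iff.mpr hz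
  unfold aK
  refine ContDiffAt.contDiffWithinAt ?_
  fun_prop (disch := simpa)

lemma isPosHomogeneous_aK (i j : Fin 3) : IsPosHomogeneous (aK i j) (-1) := fun z hz t ht => by
  have hz' : ‖z‖ ≠ 0 := norm_ne_zero_iff.mpr hz
  simp only [aK, norm_smul, Real.norm_of_nonneg ht.le, PiLp.smul_apply, smul_eq_mul,
    Real.rpow_neg_one]
  field_simp

/-- The second derivatives of the Coulomb kernel have zero spherical average,
with respect to the surface (2-dimensional Hausdorff) measure on the unit sphere. -/
theorem second_deriv_kernel_spherical_average_zero (i j k l : Fin 3) :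
    ∫ z in Metric.sphere (0 : EuclideanSpace ℝ (Fin 3)) 1,
      ‖z‖ ^ 3 * d2aK i j k l z ∂(μH[2]) = 0 := by
  have hdim : finrank ℝ (EuclideanSpace ℝ (Fin 3)) = 2 + 1 := finrank_euclideanSpace_fin
  have hdegree : (1 - (2 : ℕ) : ℝ) = -1 := by norm_num
  exact_mod_cast second_deriv_kernel_spherical_average_zero_general hdim (contDiffOn_aK i j)
    (hdegree ▸ isPosHomogeneous_aK i j) (EuclideanSpace.single k 1) (EuclideanSpace.single l 1)
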